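/- arXiv:1302.5535 — 2 statements merged into one kernel-verified Lean document; each statement's English description precedes it below -/
import Mathlib

section
/- Let A = A(ω, ε) be the 4×4 Toh matrix with 0 < ω < 2 and ε > 0, and let B ∈ ℝ^{8×8} be the block diagonal matrix B = diag(A, A). Then Ψ_{3,ℝ,ℝ}(B) = φ_3(A), i.e., the third (real) worst-case GMRES approximation of B equals the third ideal GMRES approximation of A. -/
open Polynomial Matrix

/-- The Euclidean norm of a real vector. -/
noncomputable def euclNorm {ι : Type*} [Fintype ι] (v : ι → ℝ) : ℝ :=
  Real.sqrt (∑ i, v i ^ 2)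

/-- The Euclidean norm of a complex vector. -/
noncomputable def euclNormC {ι : Type*} [Fintype ι] (v : ι → ℂ) : ℝ :=
  Real.sqrt (∑ i, ‖v i‖ ^ 2)

/-- The Euclidean inner product of two real vectors. -/
noncomputable def edot {ι : Type*} [Fintype ι] (u v : ι → ℝ) : ℝ := ∑ i, u i * v i

/-- `p ∈ π_k`: real polynomials of degree at most `k` with value `1` at the origin. -/
def IsPik (k : ℕ) (p : Polynomial ℝ) : Prop := p.natDegree ≤ k ∧ p.eval 0 = 1

/-- `p ∈ π_{k,ℂ}`: complex polynomials of degree at most `k` with value `1` at the origin. -/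
def IsPikC (k : ℕ) (p : Polynomial ℂ) : Prop := p.natDegree ≤ k ∧ p.eval 0 = 1

/-- The `k`-th GMRES residual norm `min_{p ∈ π_k} ‖p(A)v‖`. -/
noncomputable def gmresVal {ι : Type*} [Fintype ι] [DecidableEq ι]
    (A : Matrix ι ι ℝ) (k : ℕ) (v : ι → ℝ) : ℝ :=
  sInf {s : ℝ | ∃ p : Polynomial ℝ, IsPik k p ∧ s = euclNorm ((Polynomial.aeval A p).mulVec v)}

/-- The `k`-th worst-case GMRES approximation `Ψ_k(A) = max_{‖v‖=1} min_{p ∈ π_k} ‖p(A)v‖`. -/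
noncomputable def Psi {ι : Type*} [Fintype ι] [DecidableEq ι]
    (A : Matrix ι ι ℝ) (k : ℕ) : ℝ :=
  sSup {r : ℝ | ∃ v : ι → ℝ, euclNorm v = 1 ∧ r = gmresVal A k v}

/-- `d(A)`: the degree of the minimal polynomial of `A`. -/
noncomputable def dA {ι : Type*} [Fintype ι] [DecidableEq ι] (A : Matrix ι ι ℝ) : ℕ :=
  (minpoly ℝ A).natDegree

/-- `d(A,b)`: the smallest degree of a nonzero polynomial `q` with `q(A)b = 0`. -/
noncomputable def dAb {ι : Type*} [Fintype ι] [DecidableEq ι]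
    (A : Matrix ι ι ℝ) (b : ι → ℝ) : ℕ :=
  sInf {d : ℕ | ∃ q : Polynomial ℝ, q ≠ 0 ∧ q.natDegree = d ∧ (Polynomial.aeval A q).mulVec b = 0}

/-- `r = GMRES(A,b,k)`: `r = p(A)b` for some `p ∈ π_k` minimizing `‖p(A)b‖` over `π_k`. -/
def IsGmresRes {ι : Type*} [Fintype ι] [DecidableEq ι]
    (A : Matrix ι ι ℝ) (k : ℕ) (b r : ι → ℝ) : Prop :=
  ∃ p : Polynomial ℝ, IsPik k p ∧ r = (Polynomial.aeval A p).mulVec b ∧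
    ∀ q : Polynomial ℝ, IsPik k q → euclNorm r ≤ euclNorm ((Polynomial.aeval A q).mulVec b)

/-- `p` is the `k`-th GMRES polynomial of `A` and `b`: `p ∈ π_k` minimizes `‖p(A)b‖`. -/
def IsGmresPoly {ι : Type*} [Fintype ι] [DecidableEq ι]
    (A : Matrix ι ι ℝ) (k : ℕ) (b : ι → ℝ) (p : Polynomial ℝ) : Prop :=
  IsPik k p ∧ ∀ q : Polynomial ℝ, IsPik k q →
    euclNorm ((Polynomial.aeval A p).mulVec b) ≤ euclNorm ((Polynomial.aeval A q).mulVec b)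

/-- The Krylov subspace `K_k(A,b) = span{b, Ab, …, A^{k-1}b}`. -/
noncomputable def krylov {ι : Type*} [Fintype ι] [DecidableEq ι]
    (A : Matrix ι ι ℝ) (k : ℕ) (b : ι → ℝ) : Submodule ℝ (ι → ℝ) :=
  Submodule.span ℝ (Set.range fun i : Fin k => (A ^ (i : ℕ)).mulVec b)

/-- `b` satisfies the cross equality for `A` and step `k`. -/
def CrossEq {ι : Type*} [Fintype ι] [DecidableEq ι]
    (A : Matrix ι ι ℝ) (k : ℕ) (b : ι → ℝ) : Prop :=
  ∀ r s : ι → ℝ, IsGmresRes A k b r → IsGmresRes Aᵀ k ((euclNorm r)⁻¹ • r) s →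
    b = (euclNorm s)⁻¹ • s

/-- The Krylov matrix `K(v) = [Av, A²v, …, A^k v]`. -/
noncomputable def Kmat {n : ℕ} (A : Matrix (Fin n) (Fin n) ℝ) (k : ℕ) (v : Fin n → ℝ) :
    Matrix (Fin n) (Fin k) ℝ :=
  Matrix.of fun i j => (A ^ ((j : ℕ) + 1)).mulVec v i

/-- `γ(v) = (K(v)ᵀK(v))⁻¹ K(v)ᵀ v`. -/
noncomputable def gammaVec {n : ℕ} (A : Matrix (Fin n) (Fin n) ℝ) (k : ℕ) (v : Fin n → ℝ) :
    Fin k → ℝ :=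
  ((Kmat A k v)ᵀ * Kmat A k v)⁻¹ *ᵥ ((Kmat A k v)ᵀ *ᵥ v)

/-- `g(v) = min_{c ∈ ℝ^k} ‖v - K(v)c‖²`. -/
noncomputable def gFun {n : ℕ} (A : Matrix (Fin n) (Fin n) ℝ) (k : ℕ) (v : Fin n → ℝ) : ℝ :=
  sInf {s : ℝ | ∃ c : Fin k → ℝ, s = euclNorm (v - Kmat A k v *ᵥ c) ^ 2}

/-- `p(z; c) = 1 - ∑_{j=1}^k c_j z^j`. -/
noncomputable def pPoly {k : ℕ} (c : Fin k → ℝ) : Polynomial ℝ :=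
  1 - ∑ j : Fin k, Polynomial.C (c j) * Polynomial.X ^ ((j : ℕ) + 1)

/-- `f(c,v) = ‖p(A;c)v‖²`. -/
noncomputable def fFun {n k : ℕ} (A : Matrix (Fin n) (Fin n) ℝ) (c : Fin k → ℝ)
    (v : Fin n → ℝ) : ℝ :=
  euclNorm ((Polynomial.aeval A (pPoly c)).mulVec v) ^ 2

/-- `F(c,v) = f(c,v)/(vᵀv)`. -/
noncomputable def FFun {n k : ℕ} (A : Matrix (Fin n) (Fin n) ℝ) (c : Fin k → ℝ)
    (v : Fin n → ℝ) : ℝ :=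
  fFun A c v / edot v v

/-- The Toh matrix `A(ω, ε)`. -/
noncomputable def tohMatrix (ω ε : ℝ) : Matrix (Fin 4) (Fin 4) ℝ :=
  !![1, ε, 0, 0; 0, -1, ω / ε, 0; 0, 0, 1, ε; 0, 0, 0, -1]

/-- `p` is a `k`-th worst-case GMRES polynomial of `A`. -/
def IsWCPoly {ι : Type*} [Fintype ι] [DecidableEq ι]
    (A : Matrix ι ι ℝ) (k : ℕ) (p : Polynomial ℝ) : Prop :=
  IsPik k p ∧ ∃ b : ι → ℝ, euclNorm b = 1 ∧
    (∀ q : Polynomial ℝ, IsPik k q →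
      euclNorm ((Polynomial.aeval A p).mulVec b) ≤ euclNorm ((Polynomial.aeval A q).mulVec b)) ∧
    euclNorm ((Polynomial.aeval A p).mulVec b) = Psi A k

/-- The spectral (Euclidean operator) norm of a real matrix. -/
noncomputable def specNorm {ι : Type*} [Fintype ι] (M : Matrix ι ι ℝ) : ℝ :=
  sSup {r : ℝ | ∃ v : ι → ℝ, euclNorm v = 1 ∧ r = euclNorm (M *ᵥ v)}

/-- The `k`-th ideal GMRES approximation `φ_k(A) = min_{p ∈ π_k} ‖p(A)‖`. -/
noncomputable def phiIdeal {ι : Type*} [Fintype ι] [DecidableEq ι]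
    (A : Matrix ι ι ℝ) (k : ℕ) : ℝ :=
  sInf {r : ℝ | ∃ p : Polynomial ℝ, IsPik k p ∧ r = specNorm (Polynomial.aeval A p)}

/-- Complexification of a real matrix. -/
noncomputable def matC {ι : Type*} (A : Matrix ι ι ℝ) : Matrix ι ι ℂ :=
  A.map fun x => (x : ℂ)

/-- Complexification of a real vector. -/
noncomputable def vecC {ι : Type*} (b : ι → ℝ) : ι → ℂ := fun i => (b i : ℂ)

/-- `Ψ_{k,ℂ,ℝ}(A)`: complex polynomials, real initial vectors. -/
noncomputable def PsiCR {ι : Type*} [Fintype ι] [DecidableEq ι]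
    (A : Matrix ι ι ℝ) (k : ℕ) : ℝ :=
  sSup {r : ℝ | ∃ b : ι → ℝ, euclNorm b = 1 ∧
    r = sInf {s : ℝ | ∃ p : Polynomial ℂ, IsPikC k p ∧
      s = euclNormC ((Polynomial.aeval (matC A) p).mulVec (vecC b))}}

/-- `Ψ_{k,ℂ,ℂ}(A)`: complex polynomials, complex initial vectors. -/
noncomputable def PsiCC {ι : Type*} [Fintype ι] [DecidableEq ι]
    (A : Matrix ι ι ℝ) (k : ℕ) : ℝ :=
  sSup {r : ℝ | ∃ b : ι → ℂ, euclNormC b = 1 ∧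
    r = sInf {s : ℝ | ∃ p : Polynomial ℂ, IsPikC k p ∧
      s = euclNormC ((Polynomial.aeval (matC A) p).mulVec b)}}

/-- `Ψ_{k,ℝ,ℂ}(A)`: real polynomials, complex initial vectors. -/
noncomputable def PsiRC {ι : Type*} [Fintype ι] [DecidableEq ι]
    (A : Matrix ι ι ℝ) (k : ℕ) : ℝ :=
  sSup {r : ℝ | ∃ b : ι → ℂ, euclNormC b = 1 ∧
    r = sInf {s : ℝ | ∃ p : Polynomial ℝ, IsPik k p ∧
      s = euclNormC ((Polynomial.aeval (matC A) (p.map (algebraMap ℝ ℂ))).mulVec b)}}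

/-- `φ_{k,ℝ,ℝ}(A)`. -/
noncomputable def phiRR {ι : Type*} [Fintype ι] [DecidableEq ι]
    (A : Matrix ι ι ℝ) (k : ℕ) : ℝ :=
  sInf {r : ℝ | ∃ p : Polynomial ℝ, IsPik k p ∧
    r = sSup {s : ℝ | ∃ b : ι → ℝ, euclNorm b = 1 ∧
      s = euclNorm ((Polynomial.aeval A p).mulVec b)}}

/-- `φ_{k,ℂ,ℝ}(A)`. -/
noncomputable def phiCR {ι : Type*} [Fintype ι] [DecidableEq ι]
    (A : Matrix ι ι ℝ) (k : ℕ) : ℝ :=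
  sInf {r : ℝ | ∃ p : Polynomial ℂ, IsPikC k p ∧
    r = sSup {s : ℝ | ∃ b : ι → ℝ, euclNorm b = 1 ∧
      s = euclNormC ((Polynomial.aeval (matC A) p).mulVec (vecC b))}}

/-- `φ_{k,ℝ,ℂ}(A)`. -/
noncomputable def phiRC {ι : Type*} [Fintype ι] [DecidableEq ι]
    (A : Matrix ι ι ℝ) (k : ℕ) : ℝ :=
  sInf {r : ℝ | ∃ p : Polynomial ℝ, IsPik k p ∧
    r = sSup {s : ℝ | ∃ b : ι → ℂ, euclNormC b = 1 ∧
      s = euclNormC ((Polynomial.aeval (matC A) (p.map (algebraMap ℝ ℂ))).mulVec b)}}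

/-- `φ_{k,ℂ,ℂ}(A)`. -/
noncomputable def phiCC {ι : Type*} [Fintype ι] [DecidableEq ι]
    (A : Matrix ι ι ℝ) (k : ℕ) : ℝ :=
  sInf {r : ℝ | ∃ p : Polynomial ℂ, IsPikC k p ∧
    r = sSup {s : ℝ | ∃ b : ι → ℂ, euclNormC b = 1 ∧
      s = euclNormC ((Polynomial.aeval (matC A) p).mulVec b)}}

/-!
The square of the Toh matrix is `shear ω ⊗ I₂`, where `shear ω = [1, ω; 0, 1]`, and the partial
traces of its odd powers `A` and `A³` over the second factor of `ℝ⁴ = ℝ² ⊗ ℝ²` vanish. Testing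
`p(A)` on the two copies `x ⊗ e₀`, `x ⊗ e₁` of a planar vector, one in each block of
`B = diag(A, A)`, therefore sees only the even part of `p`, and the problem reduces to the first
ideal approximation of `shear ω`. There a number `c` and vectors `x`, `y` with `y ⟂ shear ω x` and
`‖1 - c • shear ω‖ ‖y‖ ‖x‖ = |⟨y, x⟩|` are explicit, and they close the chain
`φ₃(A) ≤ ‖1 - c • A²‖ ≤ ‖1 - c • shear ω‖ ≤ Ψ₃(B) ≤ φ₃(B) ≤ φ₃(A)`.
-/

section EuclideanNorm

variable {ι : Type*} [Fintype ι]

lemma euclNorm_eq_norm_toLp (v : ι → ℝ) : euclNorm v = ‖WithLp.toLp 2 v‖ := by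
  simp [euclNorm, EuclideanSpace.norm_eq]

lemma edot_eq_dotProduct (u v : ι → ℝ) : edot u v = u ⬝ᵥ v := rfl

lemma edot_eq_inner_toLp (u v : ι → ℝ) :
    edot u v = inner ℝ (WithLp.toLp 2 u) (WithLp.toLp 2 v) := by
  simp [edot, PiLp.inner_apply, mul_comm]

lemma euclNorm_nonneg (v : ι → ℝ) : 0 ≤ euclNorm v := Real.sqrt_nonneg _

lemma euclNorm_sq (v : ι → ℝ) : euclNorm v ^ 2 = ∑ i, v i ^ 2 :=
  Real.sq_sqrt (Finset.sum_nonneg fun _ _ => sq_nonneg _)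

lemma euclNorm_pos {v : ι → ℝ} (hv : v ≠ 0) : 0 < euclNorm v := by
  rw [euclNorm_eq_norm_toLp]
  exact norm_pos_iff.2 ((WithLp.toLp_eq_zero 2).not.2 hv)

lemma euclNorm_smul (a : ℝ) (v : ι → ℝ) : euclNorm (a • v) = |a| * euclNorm v := by
  simp [euclNorm_eq_norm_toLp, norm_smul]

lemma euclNorm_inv_smul_self {v : ι → ℝ} (hv : v ≠ 0) : euclNorm ((euclNorm v)⁻¹ • v) = 1 := by
  have hpos := euclNorm_pos hv
  rw [euclNorm_smul, abs_of_pos (inv_pos.2 hpos), inv_mul_cancel₀ hpos.ne']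

lemma edot_self (v : ι → ℝ) : edot v v = euclNorm v ^ 2 := by
  rw [euclNorm_sq]
  exact Finset.sum_congr rfl fun i _ => (sq (v i)).symm

lemma abs_edot_le (u v : ι → ℝ) : |edot u v| ≤ euclNorm u * euclNorm v := by
  simpa [edot_eq_inner_toLp, euclNorm_eq_norm_toLp] using
    abs_real_inner_le_norm (WithLp.toLp 2 u) (WithLp.toLp 2 v)

end EuclideanNorm

section SpectralNorm

variable {ι : Type*} [Fintype ι]

lemma specNorm_nonneg (M : Matrix ι ι ℝ) : 0 ≤ specNorm M :=
  Real.sSup_nonneg (by rintro _ ⟨v, -, rfl⟩; exact euclNorm_nonneg _)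

lemma specNorm_le {M : Matrix ι ι ℝ} {C : ℝ} (hC : 0 ≤ C)
    (h : ∀ v, euclNorm (M *ᵥ v) ≤ C * euclNorm v) : specNorm M ≤ C := by
  refine Real.sSup_le ?_ hC
  rintro _ ⟨v, hv, rfl⟩
  simpa [hv] using h v

lemma bddAbove_euclNorm_mulVec (M : Matrix ι ι ℝ) :
    BddAbove {r : ℝ | ∃ v : ι → ℝ, euclNorm v = 1 ∧ r = euclNorm (M *ᵥ v)} := by
  classical
  refine ⟨‖toEuclideanCLM (𝕜 := ℝ) M‖, ?_⟩
  rintro _ ⟨v, hv, rfl⟩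
  rw [euclNorm_eq_norm_toLp] at hv ⊢
  simpa [hv] using (toEuclideanCLM (𝕜 := ℝ) M).le_opNorm (WithLp.toLp 2 v)

lemma euclNorm_mulVec_le (M : Matrix ι ι ℝ) (v : ι → ℝ) :
    euclNorm (M *ᵥ v) ≤ specNorm M * euclNorm v := by
  rcases eq_or_ne v 0 with rfl | hv
  · simp [euclNorm]
  have hpos := euclNorm_pos hv
  have hunit : euclNorm (M *ᵥ ((euclNorm v)⁻¹ • v)) ≤ specNorm M :=
    le_csSup (bddAbove_euclNorm_mulVec M) ⟨_, euclNorm_inv_smul_self hv, rfl⟩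
  rwa [mulVec_smul, euclNorm_smul, abs_of_pos (inv_pos.2 hpos), inv_mul_le_iff₀ hpos,
    mul_comm] at hunit

lemma sq_euclNorm_mulVec_le (M : Matrix ι ι ℝ) (v : ι → ℝ) :
    euclNorm (M *ᵥ v) ^ 2 ≤ specNorm M ^ 2 * euclNorm v ^ 2 := by
  rw [← mul_pow]
  exact pow_le_pow_left₀ (euclNorm_nonneg _) (euclNorm_mulVec_le M v) 2

lemma specNorm_le_of_sq_le {M : Matrix ι ι ℝ} {C : ℝ} (hC : 0 ≤ C)
    (h : ∀ v, euclNorm (M *ᵥ v) ^ 2 ≤ C ^ 2 * euclNorm v ^ 2) : specNorm M ≤ C :=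
  specNorm_le hC fun v => le_of_sq_le_sq (by simpa only [mul_pow] using h v)
    (mul_nonneg hC (euclNorm_nonneg v))

lemma specNorm_one_le [DecidableEq ι] : specNorm (1 : Matrix ι ι ℝ) ≤ 1 :=
  specNorm_le zero_le_one fun v => by simp

lemma euclNorm_sumElim_sq {κ : Type*} [Fintype κ] (v : ι → ℝ) (w : κ → ℝ) :
    euclNorm (Sum.elim v w) ^ 2 = euclNorm v ^ 2 + euclNorm w ^ 2 := by
  simp [euclNorm_sq]

lemma specNorm_fromBlocks_diag_self_le (M : Matrix ι ι ℝ) :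
    specNorm (fromBlocks M 0 0 M) ≤ specNorm M := by
  refine specNorm_le_of_sq_le (specNorm_nonneg M) fun v => ?_
  have hv : euclNorm v ^ 2 = euclNorm (v ∘ Sum.inl) ^ 2 + euclNorm (v ∘ Sum.inr) ^ 2 := by
    rw [← euclNorm_sumElim_sq, Sum.elim_comp_inl_inr]
  simp only [fromBlocks_mulVec, zero_mulVec, add_zero, zero_add, euclNorm_sumElim_sq, hv, mul_add]
  exact add_le_add (sq_euclNorm_mulVec_le M _) (sq_euclNorm_mulVec_le M _)

end SpectralNorm

section Residual

lemma isPik_one (k : ℕ) : IsPik k 1 := by simp [IsPik]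

lemma isPik_one_sub_C_mul_X_sq {k : ℕ} (hk : 2 ≤ k) (c : ℝ) : IsPik k (1 - C c * X ^ 2) :=
  ⟨by compute_degree!, by simp⟩

lemma IsPik.aeval_eq {R : Type*} [Ring R] [Algebra ℝ R] {k : ℕ} {p : ℝ[X]} (hp : IsPik k p)
    (a : R) : aeval a p = 1 + ∑ j ∈ Finset.range k, p.coeff (j + 1) • a ^ (j + 1) := by
  have hcoeff : p.coeff 0 = 1 := by rw [coeff_zero_eq_eval_zero, hp.2]
  rw [aeval_eq_sum_range' (Nat.lt_succ_of_le hp.1), Finset.sum_range_succ', hcoeff, pow_zero,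
    one_smul, add_comm]

lemma aeval_fromBlocks_diag {R m n : Type*} [CommRing R] [Fintype m] [DecidableEq m] [Fintype n]
    [DecidableEq n] (A : Matrix m m R) (D : Matrix n n R) (p : R[X]) :
    aeval (fromBlocks A 0 0 D) p = fromBlocks (aeval A p) 0 0 (aeval D p) := by
  induction p using Polynomial.induction_on' with
  | add p q hp hq => simp [hp, hq, fromBlocks_add]
  | monomial j a =>
    simp [fromBlocks_diagonal_pow, fromBlocks_smul, aeval_monomial, ← Algebra.smul_def]

variable {ι : Type*} [Fintype ι] [DecidableEq ι] {A : Matrix ι ι ℝ} {k : ℕ}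

lemma phiIdeal_le_specNorm {p : ℝ[X]} (hp : IsPik k p) : phiIdeal A k ≤ specNorm (aeval A p) :=
  csInf_le ⟨0, by rintro _ ⟨q, -, rfl⟩; exact specNorm_nonneg _⟩ ⟨p, hp, rfl⟩

lemma le_phiIdeal {m : ℝ} (h : ∀ p, IsPik k p → m ≤ specNorm (aeval A p)) : m ≤ phiIdeal A k :=
  le_csInf ⟨_, 1, isPik_one k, rfl⟩ (by rintro _ ⟨p, hp, rfl⟩; exact h p hp)

lemma phiIdeal_nonneg (A : Matrix ι ι ℝ) (k : ℕ) : 0 ≤ phiIdeal A k :=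
  le_phiIdeal fun _ _ => specNorm_nonneg _

lemma gmresVal_le {p : ℝ[X]} (hp : IsPik k p) (v : ι → ℝ) :
    gmresVal A k v ≤ euclNorm (aeval A p *ᵥ v) :=
  csInf_le ⟨0, by rintro _ ⟨q, -, rfl⟩; exact euclNorm_nonneg _⟩ ⟨p, hp, rfl⟩

lemma le_gmresVal {m : ℝ} {v : ι → ℝ} (h : ∀ p, IsPik k p → m ≤ euclNorm (aeval A p *ᵥ v)) :
    m ≤ gmresVal A k v :=
  le_csInf ⟨_, 1, isPik_one k, rfl⟩ (by rintro _ ⟨p, hp, rfl⟩; exact h p hp)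

lemma gmresVal_le_phiIdeal {v : ι → ℝ} (hv : euclNorm v = 1) : gmresVal A k v ≤ phiIdeal A k :=
  le_phiIdeal fun p hp => (gmresVal_le hp v).trans <| by
    simpa [hv] using euclNorm_mulVec_le (aeval A p) v

lemma Psi_le_phiIdeal (A : Matrix ι ι ℝ) (k : ℕ) : Psi A k ≤ phiIdeal A k :=
  Real.sSup_le (by rintro _ ⟨v, hv, rfl⟩; exact gmresVal_le_phiIdeal hv) (phiIdeal_nonneg A k)

lemma gmresVal_le_Psi {v : ι → ℝ} (hv : euclNorm v = 1) : gmresVal A k v ≤ Psi A k :=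
  le_csSup ⟨phiIdeal A k, by rintro _ ⟨w, hw, rfl⟩; exact gmresVal_le_phiIdeal hw⟩ ⟨v, hv, rfl⟩

lemma le_Psi_of_le_abs_edot {m : ℝ} {u b : ι → ℝ} (hu : u ≠ 0) (hb : b ≠ 0)
    (h : ∀ p, IsPik k p → m * (euclNorm u * euclNorm b) ≤ |edot u (aeval A p *ᵥ b)|) :
    m ≤ Psi A k := by
  refine le_trans (le_gmresVal fun p hp => ?_) (gmresVal_le_Psi (euclNorm_inv_smul_self hb))
  have hb_pos := euclNorm_pos hb
  rw [mulVec_smul, euclNorm_smul, abs_of_pos (inv_pos.2 hb_pos), le_inv_mul_iff₀ hb_pos]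
  refine le_of_mul_le_mul_left ?_ (euclNorm_pos hu)
  calc euclNorm u * (euclNorm b * m) = m * (euclNorm u * euclNorm b) := by ring
    _ ≤ |edot u (aeval A p *ᵥ b)| := h p hp
    _ ≤ euclNorm u * euclNorm (aeval A p *ᵥ b) := abs_edot_le _ _

lemma phiIdeal_fromBlocks_diag_self_le (A : Matrix ι ι ℝ) (k : ℕ) :
    phiIdeal (fromBlocks A 0 0 A) k ≤ phiIdeal A k :=
  le_phiIdeal fun p hp => (phiIdeal_le_specNorm hp).trans <| by
    rw [aeval_fromBlocks_diag]
    exact specNorm_fromBlocks_diag_self_le _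

end Residual

/-- A certificate that `c` minimizes `‖1 - c • M‖`: the form `N ↦ ⟨y, N x⟩` takes the same value at
`1 - t • M` for every `t`, and at `t = c` its modulus attains the upper bound
`‖1 - c • M‖ ‖y‖ ‖x‖`. The vectors are not normalized. -/
structure IsDualCertificate {ι : Type*} [Fintype ι] [DecidableEq ι] (M : Matrix ι ι ℝ) (c : ℝ)
    (x y : ι → ℝ) : Prop where
  right_ne_zero : x ≠ 0
  left_ne_zero : y ≠ 0
  edot_mulVec : edot y (M *ᵥ x) = 0
  specNorm_mul_le : specNorm (1 - c • M) * (euclNorm y * euclNorm x) ≤ |edot y x|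

section Shear

/-- The planar shear `[1, ω; 0, 1]`. The square of the Toh matrix is its Kronecker product with the
`2 × 2` identity, which reduces the ideal approximation of the Toh matrix to a planar problem. -/
def shear (ω : ℝ) : Matrix (Fin 2) (Fin 2) ℝ := !![1, ω; 0, 1]

lemma shear_mulVec (ω : ℝ) (v : Fin 2 → ℝ) : shear ω *ᵥ v = ![v 0 + ω * v 1, v 1] := by
  ext i
  fin_cases i <;> simp [shear, mulVec, dotProduct]

lemma specNorm_one_sub_smul_shear_le {ω : ℝ} (hω : ω ^ 2 ≤ 4) :
    specNorm (1 - ((4 - ω ^ 2) / (4 + ω ^ 2)) • shear ω) ≤ 4 * |ω| / (4 + ω ^ 2) := by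
  refine specNorm_le_of_sq_le (by positivity) fun v => ?_
  -- The linear form in the defect vanishes at the certificate vector `(ω, -2)`.
  have hdefect : (4 * |ω| / (4 + ω ^ 2)) ^ 2 * euclNorm v ^ 2
      - euclNorm ((1 - ((4 - ω ^ 2) / (4 + ω ^ 2)) • shear ω) *ᵥ v) ^ 2
      = (4 - ω ^ 2) * ω ^ 2 / (4 + ω ^ 2) ^ 2 * (2 * v 0 + ω * v 1) ^ 2 := by
    simp only [div_pow, mul_pow, sq_abs, euclNorm_sq, Fin.sum_univ_two, sub_mulVec, smul_mulVec,
      one_mulVec, shear_mulVec, Pi.sub_apply, Pi.smul_apply, smul_eq_mul, cons_val_zero,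
      cons_val_one]
    field_simp
    ring
  have hnonneg : 0 ≤ (4 - ω ^ 2) * ω ^ 2 / (4 + ω ^ 2) ^ 2 * (2 * v 0 + ω * v 1) ^ 2 :=
    mul_nonneg (div_nonneg (mul_nonneg (sub_nonneg.2 hω) (sq_nonneg ω)) (sq_nonneg _))
      (sq_nonneg _)
  linarith

lemma exists_isDualCertificate_shear_of_sq_le {ω : ℝ} (hω : ω ^ 2 ≤ 4) :
    ∃ (c : ℝ) (x y : Fin 2 → ℝ), IsDualCertificate (shear ω) c x y := by
  have hden : 0 < 4 + ω ^ 2 := by positivity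
  have hnorm : euclNorm ![2, -ω] * euclNorm ![ω, -2] = 4 + ω ^ 2 := by
    have hswap : euclNorm ![2, -ω] = euclNorm ![ω, -2] := by simp [euclNorm, add_comm]
    rw [hswap, ← sq, euclNorm_sq, Fin.sum_univ_two]
    simp only [cons_val_zero, cons_val_one]
    ring
  refine ⟨(4 - ω ^ 2) / (4 + ω ^ 2), ![ω, -2], ![2, -ω], by simp, by simp, ?_, ?_⟩
  · simp only [shear_mulVec, edot, Fin.sum_univ_two, cons_val_zero, cons_val_one]
    ring
  · calc _ ≤ 4 * |ω| / (4 + ω ^ 2) * (4 + ω ^ 2) := by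
          rw [hnorm]
          exact mul_le_mul_of_nonneg_right (specNorm_one_sub_smul_shear_le hω) hden.le
      _ = |edot ![2, -ω] ![ω, -2]| := by
          have hdot : edot ![2, -ω] ![ω, -2] = 4 * ω := by
            simp only [edot, Fin.sum_univ_two, cons_val_zero, cons_val_one]
            ring
          rw [div_mul_cancel₀ _ hden.ne', hdot, abs_mul, abs_of_pos (zero_lt_four' ℝ)]

lemma exists_isDualCertificate_shear_of_four_le_sq {ω : ℝ} (hω : 4 ≤ ω ^ 2) :
    ∃ (c : ℝ) (x y : Fin 2 → ℝ), IsDualCertificate (shear ω) c x y := by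
  -- `x₀² + ω x₀ x₁ + x₁² = 0` has a nonzero solution because its discriminant is nonnegative.
  set x : Fin 2 → ℝ := ![ω + √(ω ^ 2 - 4), -2] with hx
  have hsqrt : √(ω ^ 2 - 4) ^ 2 = ω ^ 2 - 4 := Real.sq_sqrt (sub_nonneg.2 hω)
  have hx_ne : x ≠ 0 := by simp [hx]
  refine ⟨0, x, x, hx_ne, hx_ne, ?_, ?_⟩
  · simp only [shear_mulVec, edot, Fin.sum_univ_two, hx, cons_val_zero, cons_val_one]
    linear_combination hsqrt
  · rw [zero_smul, sub_zero, edot_self, abs_sq, ← sq]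
    exact mul_le_of_le_one_left (sq_nonneg _) specNorm_one_le

lemma exists_isDualCertificate_shear (ω : ℝ) :
    ∃ (c : ℝ) (x y : Fin 2 → ℝ), IsDualCertificate (shear ω) c x y :=
  (le_total (ω ^ 2) 4).elim exists_isDualCertificate_shear_of_sq_le
    exists_isDualCertificate_shear_of_four_le_sq

end Shear

section Toh

variable {ω ε : ℝ}

lemma tohMatrix_sq (hε : ε ≠ 0) :
    tohMatrix ω ε ^ 2 = !![1, 0, ω, 0; 0, 1, 0, ω; 0, 0, 1, 0; 0, 0, 0, 1] := by
  ext i j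
  fin_cases i <;> fin_cases j <;> simp [tohMatrix, sq, mul_apply, Fin.sum_univ_four,
    mul_div_cancel₀, hε]

lemma tohMatrix_sq_mulVec (hε : ε ≠ 0) (v : Fin 4 → ℝ) :
    tohMatrix ω ε ^ 2 *ᵥ v = ![v 0 + ω * v 2, v 1 + ω * v 3, v 2, v 3] := by
  ext i
  fin_cases i <;> simp [tohMatrix_sq hε, mulVec, dotProduct, Fin.sum_univ_four]

lemma specNorm_one_sub_smul_tohMatrix_sq_le (hε : ε ≠ 0) (c : ℝ) :
    specNorm (1 - c • tohMatrix ω ε ^ 2) ≤ specNorm (1 - c • shear ω) := by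
  refine specNorm_le_of_sq_le (specNorm_nonneg _) fun v => ?_
  calc euclNorm ((1 - c • tohMatrix ω ε ^ 2) *ᵥ v) ^ 2
      = euclNorm ((1 - c • shear ω) *ᵥ ![v 0, v 2]) ^ 2
        + euclNorm ((1 - c • shear ω) *ᵥ ![v 1, v 3]) ^ 2 := by
        simp only [euclNorm_sq, Fin.sum_univ_four, Fin.sum_univ_two, sub_mulVec, smul_mulVec,
          one_mulVec, tohMatrix_sq_mulVec hε, shear_mulVec, Pi.sub_apply, Pi.smul_apply,
          smul_eq_mul, cons_val]
        ring
    _ ≤ specNorm (1 - c • shear ω) ^ 2 * (euclNorm ![v 0, v 2] ^ 2 + euclNorm ![v 1, v 3] ^ 2) := by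
        rw [mul_add]
        exact add_le_add (sq_euclNorm_mulVec_le _ _) (sq_euclNorm_mulVec_le _ _)
    _ = specNorm (1 - c • shear ω) ^ 2 * euclNorm v ^ 2 := by
        congr 1
        simp only [euclNorm_sq, Fin.sum_univ_four, Fin.sum_univ_two, cons_val_zero, cons_val_one]
        ring

/-- The partial trace over the second factor of `ℝ⁴ = ℝ² ⊗ ℝ²`, where `eᵢ ⊗ eᵣ` is the basis vector
number `2 * i + r`: the matrix of the traces of the four `2 × 2` blocks. -/
def partialTrace : Matrix (Fin 4) (Fin 4) ℝ →ₗ[ℝ] Matrix (Fin 2) (Fin 2) ℝ where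
  toFun M := !![M 0 0 + M 1 1, M 0 2 + M 1 3; M 2 0 + M 3 1, M 2 2 + M 3 3]
  map_add' M N := by ext i j; fin_cases i <;> fin_cases j <;> simp [add_add_add_comm]
  map_smul' a M := by ext i j; fin_cases i <;> fin_cases j <;> simp [mul_add]

lemma partialTrace_one : partialTrace 1 = (2 : ℝ) • 1 := by
  ext i j
  fin_cases i <;> fin_cases j <;> simp [partialTrace, one_add_one_eq_two]

lemma partialTrace_tohMatrix : partialTrace (tohMatrix ω ε) = 0 := by
  ext i j
  fin_cases i <;> fin_cases j <;> simp [partialTrace, tohMatrix]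

lemma partialTrace_tohMatrix_sq (hε : ε ≠ 0) :
    partialTrace (tohMatrix ω ε ^ 2) = (2 : ℝ) • shear ω := by
  ext i j
  fin_cases i <;> fin_cases j <;>
    simp [partialTrace, tohMatrix_sq hε, shear, one_add_one_eq_two, two_mul]

lemma partialTrace_tohMatrix_cube (hε : ε ≠ 0) : partialTrace (tohMatrix ω ε ^ 3) = 0 := by
  rw [pow_succ, tohMatrix_sq hε]
  ext i j
  fin_cases i <;> fin_cases j <;> simp [partialTrace, tohMatrix]

lemma partialTrace_aeval_tohMatrix (hε : ε ≠ 0) {p : ℝ[X]} (hp : IsPik 3 p) :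
    partialTrace (aeval (tohMatrix ω ε) p) = (2 : ℝ) • (1 + p.coeff 2 • shear ω) := by
  simp [hp.aeval_eq, Finset.sum_range_succ, partialTrace_one, partialTrace_tohMatrix,
    partialTrace_tohMatrix_sq hε, partialTrace_tohMatrix_cube hε, smul_comm (2 : ℝ)]

/-- The vector of `ℝ⁴ ⊕ ℝ⁴` with components `x ⊗ e₀` and `x ⊗ e₁`, in the indexing of
`partialTrace`; such vectors turn forms of `diag(M, M)` into forms of the partial trace of `M`. -/
def twoCopies (x : Fin 2 → ℝ) : Fin 4 ⊕ Fin 4 → ℝ :=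
  Sum.elim ![x 0, 0, x 1, 0] ![0, x 0, 0, x 1]

lemma twoCopies_ne_zero {x : Fin 2 → ℝ} (hx : x ≠ 0) : twoCopies x ≠ 0 := by
  contrapose! hx
  ext i
  fin_cases i
  · exact congrFun hx (Sum.inl 0)
  · exact congrFun hx (Sum.inl 2)

lemma euclNorm_twoCopies (x : Fin 2 → ℝ) : euclNorm (twoCopies x) = √2 * euclNorm x := by
  rw [euclNorm, euclNorm, ← Real.sqrt_mul zero_le_two]
  congr 1
  simp only [twoCopies, Fintype.sum_sum_type, Sum.elim_inl, Sum.elim_inr, Fin.sum_univ_four,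
    Fin.sum_univ_two, cons_val]
  ring

lemma edot_twoCopies_fromBlocks_mulVec (M : Matrix (Fin 4) (Fin 4) ℝ) (x y : Fin 2 → ℝ) :
    edot (twoCopies y) (fromBlocks M 0 0 M *ᵥ twoCopies x) = edot y (partialTrace M *ᵥ x) := by
  rw [fromBlocks_mulVec, twoCopies, twoCopies, Sum.elim_comp_inl, Sum.elim_comp_inr]
  simp only [zero_mulVec, add_zero, zero_add, edot, Fintype.sum_sum_type, Sum.elim_inl,
    Sum.elim_inr, partialTrace, LinearMap.coe_mk, AddHom.coe_mk, mulVec, dotProduct,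
    Fin.sum_univ_four, Fin.sum_univ_two, of_apply, cons_val]
  ring

lemma edot_twoCopies_aeval_tohMatrix (hε : ε ≠ 0) {p : ℝ[X]} (hp : IsPik 3 p) {x y : Fin 2 → ℝ}
    (hxy : edot y (shear ω *ᵥ x) = 0) :
    edot (twoCopies y) (aeval (fromBlocks (tohMatrix ω ε) 0 0 (tohMatrix ω ε)) p *ᵥ twoCopies x)
      = 2 * edot y x := by
  rw [aeval_fromBlocks_diag, edot_twoCopies_fromBlocks_mulVec, partialTrace_aeval_tohMatrix hε hp]
  rw [edot_eq_dotProduct] at hxy ⊢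
  rw [smul_mulVec, add_mulVec, smul_mulVec, one_mulVec, dotProduct_smul, dotProduct_add,
    dotProduct_smul, hxy, smul_zero, add_zero, smul_eq_mul, edot_eq_dotProduct]

lemma specNorm_one_sub_smul_shear_le_Psi (hε : ε ≠ 0) {c : ℝ} {x y : Fin 2 → ℝ}
    (h : IsDualCertificate (shear ω) c x y) :
    specNorm (1 - c • shear ω) ≤ Psi (fromBlocks (tohMatrix ω ε) 0 0 (tohMatrix ω ε)) 3 := by
  refine le_Psi_of_le_abs_edot (twoCopies_ne_zero h.left_ne_zero)
    (twoCopies_ne_zero h.right_ne_zero) fun p hp => ?_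
  rw [edot_twoCopies_aeval_tohMatrix hε hp h.edot_mulVec, abs_mul, abs_two, euclNorm_twoCopies,
    euclNorm_twoCopies, mul_mul_mul_comm, Real.mul_self_sqrt zero_le_two, mul_left_comm]
  exact mul_le_mul_of_nonneg_left h.specNorm_mul_le zero_le_two

end Toh

theorem toh_block_diag_worst_case_eq_ideal_general (ω : ℝ) {ε : ℝ} (hε : ε ≠ 0) :
    Psi (fromBlocks (tohMatrix ω ε) 0 0 (tohMatrix ω ε)) 3 = phiIdeal (tohMatrix ω ε) 3 := by
  obtain ⟨c, x, y, h⟩ := exists_isDualCertificate_shear ω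
  refine le_antisymm
    ((Psi_le_phiIdeal _ _).trans (phiIdeal_fromBlocks_diag_self_le _ _)) ?_
  calc phiIdeal (tohMatrix ω ε) 3
      ≤ specNorm (aeval (tohMatrix ω ε) (1 - C c * X ^ 2)) :=
        phiIdeal_le_specNorm (isPik_one_sub_C_mul_X_sq (by norm_num) c)
    _ = specNorm (1 - c • tohMatrix ω ε ^ 2) := by simp [Algebra.smul_def]
    _ ≤ specNorm (1 - c • shear ω) := specNorm_one_sub_smul_tohMatrix_sq_le hε c
    _ ≤ Psi (fromBlocks (tohMatrix ω ε) 0 0 (tohMatrix ω ε)) 3 :=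
        specNorm_one_sub_smul_shear_le_Psi hε h

/-- For the Toh matrix `A = A(ω,ε)` with `0 < ω < 2`, `ε > 0`, and the block
diagonal matrix `B = diag(A,A) ∈ ℝ^{8×8}`, one has `Ψ_{3,ℝ,ℝ}(B) = φ_3(A)`. -/
theorem toh_block_diag_worst_case_eq_ideal (ω ε : ℝ)
    (hω1 : 0 < ω) (hω2 : ω < 2) (hε : 0 < ε) :
    Psi (Matrix.fromBlocks (tohMatrix ω ε) 0 0 (tohMatrix ω ε)) 3
      = phiIdeal (tohMatrix ω ε) 3 :=
  toh_block_diag_worst_case_eq_ideal_general ω hε.ne'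
end

section
/- Let A ∈ ℝ^{n×n} be nonsingular and 1 ≤ k ≤ d(A) − 1. Then Ψ_{k,ℝ,ℝ}(A) = Ψ_{k,ℂ,ℝ}(A) ≤ Ψ_{k,ℂ,ℂ}(A) ≤ Ψ_{k,ℝ,ℂ}(A). -/
open Polynomial Matrix

/-!
All four quantities are instances of `sup_{b ∈ V} inf_{p ∈ P} ‖p(A)b‖`, where `P` is `π_{k,ℝ}` or
`π_{k,ℂ}` and `V` is the real or the complex unit sphere. This expression increases with `V` and
decreases with `P`, which gives the two inequalities. For real `A` and `b`, replacing the
coefficients of `p ∈ π_{k,ℂ}` by their real parts stays in `π_{k,ℝ}` and turns `p(A)b` into its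
real part, whose norm is no larger; so complex polynomials do not help against real vectors.
-/

section RealPart

/-- The polynomial of the real parts of the coefficients of `p`. It represents
real parts of residuals: `(rePoly p)(A)b = Re (p(A)b)` for real `A` and `b`. -/
noncomputable def rePoly (p : ℂ[X]) : ℝ[X] :=
  ∑ i ∈ Finset.range (p.natDegree + 1), monomial i (p.coeff i).re

theorem coeff_rePoly (p : ℂ[X]) (i : ℕ) : (rePoly p).coeff i = (p.coeff i).re := by
  rcases le_or_gt i p.natDegree with hi | hi
  · simp [rePoly, coeff_monomial, Nat.lt_succ_of_le hi]
  · simp [rePoly, coeff_monomial, coeff_eq_zero_of_natDegree_lt hi]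

theorem natDegree_rePoly_le (p : ℂ[X]) : (rePoly p).natDegree ≤ p.natDegree :=
  natDegree_le_iff_coeff_eq_zero.2 fun i hi ↦ by
    rw [coeff_rePoly, coeff_eq_zero_of_natDegree_lt hi, Complex.zero_re]

theorem IsPikC.isPik_rePoly {k : ℕ} {p : ℂ[X]} (hp : IsPikC k p) : IsPik k (rePoly p) := by
  refine ⟨(natDegree_rePoly_le p).trans hp.1, ?_⟩
  rw [← coeff_zero_eq_eval_zero, coeff_rePoly, coeff_zero_eq_eval_zero, hp.2, Complex.one_re]

theorem IsPik.isPikC_map {k : ℕ} {p : ℝ[X]} (hp : IsPik k p) :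
    IsPikC k (p.map (algebraMap ℝ ℂ)) := by
  refine ⟨natDegree_map_le.trans hp.1, ?_⟩
  rw [eval_zero_map, hp.2, map_one]

end RealPart

section Complexification

variable {ι : Type*}

theorem matC_apply (A : Matrix ι ι ℝ) (i j : ι) : matC A i j = A i j := rfl

variable [Fintype ι]

theorem euclNormC_vecC (b : ι → ℝ) : euclNormC (vecC b) = euclNorm b := by
  simp only [euclNormC, euclNorm, vecC, Complex.norm_real, Real.norm_eq_abs, sq_abs]

theorem euclNorm_re_le (v : ι → ℂ) : euclNorm (fun i ↦ (v i).re) ≤ euclNormC v := by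
  refine Real.sqrt_le_sqrt (Finset.sum_le_sum fun i _ ↦ ?_)
  rw [sq_le_sq, abs_norm]
  exact Complex.abs_re_le_norm (v i)

theorem matC_mulVec_vecC (M : Matrix ι ι ℝ) (b : ι → ℝ) : matC M *ᵥ vecC b = vecC (M *ᵥ b) :=
  funext fun i ↦ (RingHom.map_mulVec Complex.ofRealHom M b i).symm

theorem re_mulVec_vecC {m : Type*} (M : Matrix m ι ℂ) (b : ι → ℝ) (i : m) :
    ((M *ᵥ vecC b) i).re = (M.map Complex.re *ᵥ b) i := by
  simp only [mulVec, dotProduct, vecC, Complex.re_sum, Complex.re_mul_ofReal, map_apply]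

variable [DecidableEq ι]

theorem matC_pow (A : Matrix ι ι ℝ) (m : ℕ) : matC (A ^ m) = matC A ^ m :=
  map_pow (Complex.ofRealHom.mapMatrix (m := ι)) A m

theorem aeval_matC_map (A : Matrix ι ι ℝ) (p : ℝ[X]) :
    aeval (matC A) (p.map (algebraMap ℝ ℂ)) = matC (aeval A p) := by
  rw [aeval_map_algebraMap]
  exact aeval_algHom_apply (Complex.ofRealAm.mapMatrix (m := ι)) A p

theorem map_re_aeval_matC (A : Matrix ι ι ℝ) (p : ℂ[X]) :
    (aeval (matC A) p).map Complex.re = aeval A (rePoly p) := by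
  ext i j
  rw [aeval_eq_sum_range, aeval_eq_sum_range' (Nat.lt_succ_of_le (natDegree_rePoly_le p))]
  simp only [map_apply, Matrix.sum_apply, Complex.re_sum, ← matC_pow, Matrix.smul_apply,
    smul_eq_mul, matC_apply, Complex.re_mul_ofReal, coeff_rePoly]

theorem euclNorm_aeval_rePoly_le (A : Matrix ι ι ℝ) (p : ℂ[X]) (b : ι → ℝ) :
    euclNorm (aeval A (rePoly p) *ᵥ b) ≤ euclNormC (aeval (matC A) p *ᵥ vecC b) := by
  rw [← map_re_aeval_matC, ← funext (re_mulVec_vecC _ b)]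
  exact euclNorm_re_le _

theorem euclNormC_aeval_map (A : Matrix ι ι ℝ) (p : ℝ[X]) (b : ι → ℝ) :
    euclNormC (aeval (matC A) (p.map (algebraMap ℝ ℂ)) *ᵥ vecC b) =
      euclNorm (aeval A p *ᵥ b) := by
  rw [aeval_matC_map, matC_mulVec_vecC, euclNormC_vecC]

end Complexification

section WorstCase

theorem setOf_exists_eq_image {α β : Type*} (f : α → β) (p : α → Prop) :
    {y | ∃ x, p x ∧ y = f x} = f '' {x | p x} :=
  Set.ext fun _ ↦ exists_congr fun _ ↦ and_congr_right' eq_comm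

/-- The class `π_{k,ℝ}`, regarded as a set of complex polynomials. -/
def realPik (k : ℕ) : Set ℂ[X] := Polynomial.map (algebraMap ℝ ℂ) '' {p | IsPik k p}

/-- The class `π_{k,ℂ}`. -/
def complexPik (k : ℕ) : Set ℂ[X] := {p | IsPikC k p}

theorem realPik_subset_complexPik (k : ℕ) : realPik k ⊆ complexPik k :=
  Set.image_subset_iff.2 fun _ hp ↦ hp.isPikC_map

theorem one_mem_realPik (k : ℕ) : 1 ∈ realPik k := ⟨1, by simp [IsPik], Polynomial.map_one _⟩

variable {ι : Type*} [Fintype ι]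

variable (ι) in
/-- The Euclidean unit sphere of `ℂ^ι`. -/
def complexSphere : Set (ι → ℂ) := {v | euclNormC v = 1}

variable (ι) in
/-- The Euclidean unit sphere of `ℝ^ι`, regarded as a set of complex vectors. -/
def realSphere : Set (ι → ℂ) := vecC '' {b | euclNorm b = 1}

theorem realSphere_subset_complexSphere : realSphere ι ⊆ complexSphere ι :=
  Set.image_subset_iff.2 fun b hb ↦ (euclNormC_vecC b).trans hb

theorem realSphere_nonempty [Nonempty ι] : (realSphere ι).Nonempty := by
  classical
  exact ⟨_, Pi.single (Classical.arbitrary ι) 1, by simp [euclNorm, Pi.single_apply], rfl⟩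

variable [DecidableEq ι]

/-- The best residual norm `inf_{p ∈ P} ‖p(M)v‖` achieved by a class `P` of polynomials. -/
noncomputable def minResidual (P : Set ℂ[X]) (M : Matrix ι ι ℂ) (v : ι → ℂ) : ℝ :=
  sInf ((fun p ↦ euclNormC (aeval M p *ᵥ v)) '' P)

/-- The worst-case residual norm `sup_{v ∈ V} inf_{p ∈ P} ‖p(M)v‖`. Suitable choices of `P` and `V`
give `Ψ_{k,𝕂,𝔽}` for all four pairs of fields. -/
noncomputable def worstResidual (P : Set ℂ[X]) (V : Set (ι → ℂ)) (M : Matrix ι ι ℂ) : ℝ :=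
  sSup (minResidual P M '' V)

theorem bddBelow_residuals (P : Set ℂ[X]) (M : Matrix ι ι ℂ) (v : ι → ℂ) :
    BddBelow ((fun p ↦ euclNormC (aeval M p *ᵥ v)) '' P) :=
  ⟨0, Set.forall_mem_image.2 fun _ _ ↦ Real.sqrt_nonneg _⟩

variable {P Q : Set ℂ[X]} {V W : Set (ι → ℂ)}

theorem minResidual_le {p : ℂ[X]} (hp : p ∈ P) (M : Matrix ι ι ℂ) (v : ι → ℂ) :
    minResidual P M v ≤ euclNormC (aeval M p *ᵥ v) :=
  csInf_le (bddBelow_residuals P M v) (Set.mem_image_of_mem _ hp)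

theorem minResidual_anti (hP : P.Nonempty) (hPQ : P ⊆ Q) (M : Matrix ι ι ℂ) (v : ι → ℂ) :
    minResidual Q M v ≤ minResidual P M v :=
  csInf_le_csInf (bddBelow_residuals Q M v) (hP.image _) (Set.image_mono hPQ)

theorem bddAbove_minResidual (hP : 1 ∈ P) (hV : V ⊆ complexSphere ι) (M : Matrix ι ι ℂ) :
    BddAbove (minResidual P M '' V) := by
  refine ⟨1, Set.forall_mem_image.2 fun v hv ↦ ?_⟩
  calc minResidual P M v ≤ euclNormC (aeval M (1 : ℂ[X]) *ᵥ v) := minResidual_le hP M v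
    _ = euclNormC v := by rw [map_one, one_mulVec]
    _ = 1 := hV hv

theorem worstResidual_mono (hP : 1 ∈ P) (hV : V.Nonempty) (hVW : V ⊆ W)
    (hW : W ⊆ complexSphere ι) (M : Matrix ι ι ℂ) :
    worstResidual P V M ≤ worstResidual P W M :=
  csSup_le_csSup (bddAbove_minResidual hP hW M) (hV.image _) (Set.image_mono hVW)

theorem worstResidual_anti (hP : 1 ∈ P) (hPQ : P ⊆ Q) (hV : V.Nonempty)
    (hVs : V ⊆ complexSphere ι) (M : Matrix ι ι ℂ) :
    worstResidual Q V M ≤ worstResidual P V M := by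
  refine csSup_le (hV.image _) (Set.forall_mem_image.2 fun v hv ↦ ?_)
  calc minResidual Q M v ≤ minResidual P M v := minResidual_anti ⟨1, hP⟩ hPQ M v
    _ ≤ worstResidual P V M :=
      le_csSup (bddAbove_minResidual hP hVs M) (Set.mem_image_of_mem _ hv)

theorem minResidual_realPik (k : ℕ) (M : Matrix ι ι ℂ) (v : ι → ℂ) :
    minResidual (realPik k) M v = sInf {s : ℝ | ∃ p : ℝ[X], IsPik k p ∧
      s = euclNormC (aeval M (p.map (algebraMap ℝ ℂ)) *ᵥ v)} := by
  rw [minResidual, realPik, Set.image_image, setOf_exists_eq_image]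

theorem minResidual_complexPik (k : ℕ) (M : Matrix ι ι ℂ) (v : ι → ℂ) :
    minResidual (complexPik k) M v =
      sInf {s : ℝ | ∃ p : ℂ[X], IsPikC k p ∧ s = euclNormC (aeval M p *ᵥ v)} := by
  rw [minResidual, complexPik, setOf_exists_eq_image]

theorem worstResidual_realSphere (P : Set ℂ[X]) (M : Matrix ι ι ℂ) :
    worstResidual P (realSphere ι) M =
      sSup {r : ℝ | ∃ b, euclNorm b = 1 ∧ r = minResidual P M (vecC b)} := by
  rw [worstResidual, realSphere, Set.image_image, setOf_exists_eq_image]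

theorem worstResidual_complexSphere (P : Set ℂ[X]) (M : Matrix ι ι ℂ) :
    worstResidual P (complexSphere ι) M =
      sSup {r : ℝ | ∃ v, euclNormC v = 1 ∧ r = minResidual P M v} := by
  rw [worstResidual, complexSphere, setOf_exists_eq_image]

end WorstCase

section Psi

variable {ι : Type*} [Fintype ι] [DecidableEq ι] (A : Matrix ι ι ℝ) (k : ℕ)

theorem minResidual_realPik_vecC (b : ι → ℝ) :
    minResidual (realPik k) (matC A) (vecC b) = gmresVal A k b := by
  simp only [minResidual_realPik, euclNormC_aeval_map, gmresVal]

theorem minResidual_realPik_eq_complexPik (b : ι → ℝ) :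
    minResidual (realPik k) (matC A) (vecC b) = minResidual (complexPik k) (matC A) (vecC b) := by
  refine le_antisymm ?_ (minResidual_anti ⟨1, one_mem_realPik k⟩ (realPik_subset_complexPik k) _ _)
  have hne : (complexPik k).Nonempty := ⟨1, realPik_subset_complexPik k (one_mem_realPik k)⟩
  refine le_csInf (hne.image _) (Set.forall_mem_image.2 fun p hp ↦ ?_)
  have h_mem : (rePoly p).map (algebraMap ℝ ℂ) ∈ realPik k := ⟨_, hp.isPik_rePoly, rfl⟩
  calc minResidual (realPik k) (matC A) (vecC b)
      ≤ euclNormC (aeval (matC A) ((rePoly p).map (algebraMap ℝ ℂ)) *ᵥ vecC b) :=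
        minResidual_le h_mem _ _
    _ = euclNorm (aeval A (rePoly p) *ᵥ b) := euclNormC_aeval_map A (rePoly p) b
    _ ≤ euclNormC (aeval (matC A) p *ᵥ vecC b) := euclNorm_aeval_rePoly_le A p b

theorem worstResidual_realPik_realSphere :
    worstResidual (realPik k) (realSphere ι) (matC A) = Psi A k := by
  simp only [worstResidual_realSphere, minResidual_realPik_vecC, Psi]

theorem worstResidual_complexPik_realSphere :
    worstResidual (complexPik k) (realSphere ι) (matC A) = PsiCR A k := by
  simp only [worstResidual_realSphere, minResidual_complexPik, PsiCR]

theorem worstResidual_complexPik_complexSphere :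
    worstResidual (complexPik k) (complexSphere ι) (matC A) = PsiCC A k := by
  simp only [worstResidual_complexSphere, minResidual_complexPik, PsiCC]

theorem worstResidual_realPik_complexSphere :
    worstResidual (realPik k) (complexSphere ι) (matC A) = PsiRC A k := by
  simp only [worstResidual_complexSphere, minResidual_realPik, PsiRC]

theorem worstResidual_realPik_eq_complexPik :
    worstResidual (realPik k) (realSphere ι) (matC A) =
      worstResidual (complexPik k) (realSphere ι) (matC A) :=
  congrArg sSup (Set.image_congr (Set.forall_mem_image.2 fun b _ ↦
    minResidual_realPik_eq_complexPik A k b))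

theorem nonempty_of_dA_pos {A : Matrix ι ι ℝ} (hA : 0 < dA A) : Nonempty ι := by
  by_contra hι
  have : IsEmpty ι := not_nonempty_iff.1 hι
  rw [dA, minpoly.subsingleton, natDegree_one] at hA
  exact hA.false

theorem worst_case_gmres_real_complex_chain_general [Nonempty ι] :
    Psi A k = PsiCR A k ∧ PsiCR A k ≤ PsiCC A k ∧ PsiCC A k ≤ PsiRC A k := by
  rw [← worstResidual_realPik_realSphere, ← worstResidual_complexPik_realSphere,
    ← worstResidual_complexPik_complexSphere, ← worstResidual_realPik_complexSphere]
  have h_one : 1 ∈ realPik k := one_mem_realPik k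
  have h_pi : realPik k ⊆ complexPik k := realPik_subset_complexPik k
  have h_sphere : realSphere ι ⊆ complexSphere ι := realSphere_subset_complexSphere
  have h_ne : (realSphere ι).Nonempty := realSphere_nonempty
  exact ⟨worstResidual_realPik_eq_complexPik A k,
    worstResidual_mono (h_pi h_one) h_ne h_sphere subset_rfl (matC A),
    worstResidual_anti h_one h_pi (h_ne.mono h_sphere) subset_rfl (matC A)⟩

end Psi

/-- For a nonsingular `A ∈ ℝ^{n×n}` and `1 ≤ k ≤ d(A) - 1`:
`Ψ_{k,ℝ,ℝ}(A) = Ψ_{k,ℂ,ℝ}(A) ≤ Ψ_{k,ℂ,ℂ}(A) ≤ Ψ_{k,ℝ,ℂ}(A)`. -/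
theorem worst_case_gmres_real_complex_chain {n : ℕ} (A : Matrix (Fin n) (Fin n) ℝ)
    (hA : IsUnit A) (k : ℕ) (hk1 : 1 ≤ k) (hk2 : k ≤ dA A - 1) :
    Psi A k = PsiCR A k ∧ PsiCR A k ≤ PsiCC A k ∧ PsiCC A k ≤ PsiRC A k := by
  have : Nonempty (Fin n) := nonempty_of_dA_pos (A := A) (by lia)
  exact worst_case_gmres_real_complex_chain_general A k
end
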